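/- Let F satisfy Condition A, and let a and b denote the left and right endpoints of J(F) = {x ∈ ℝ : 0 < F(x) < 1}. Then θ ↦ L(θ; F) is non-decreasing on (−∞, a] (when a > −∞) and non-increasing on [b, ∞) (when b < ∞); consequently every maximizer θ*(F) of θ ↦ L(θ; F) lies in the closure of J(F). -/

import Mathlib

open MeasureTheory Filter Set
open scoped ENNReal NNReal

noncomputable section

/-- `exp` of an extended real number, valued in `ℝ≥0∞`. -/
def expE (y : EReal) : ℝ≥0∞ :=
  if y = ⊥ then 0 else if y = ⊤ then ⊤ else ENNReal.ofReal (Real.exp y.toReal)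

/-- Truncation of an extended real number to `ℝ≥0∞` (negative values go to `0`). -/
def toENN (y : EReal) : ℝ≥0∞ :=
  if y = ⊤ then ⊤ else ENNReal.ofReal y.toReal

/-- Signed (upper-minus-lower) integral of an `EReal`-valued function against a measure. -/
def eIntegral (μ : Measure ℝ) (ψ : ℝ → EReal) : EReal :=
  ((∫⁻ x, toENN (ψ x) ∂μ : ℝ≥0∞) : EReal) - ((∫⁻ x, toENN (-(ψ x)) ∂μ : ℝ≥0∞) : EReal)

/-- Concavity for `EReal`-valued functions on `ℝ`. -/
def EConcave (ψ : ℝ → EReal) : Prop :=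
  ∀ x y : ℝ, ∀ t : ℝ, 0 ≤ t → t ≤ 1 →
    ((t : EReal) * ψ x + (((1 - t) : ℝ) : EReal) * ψ y) ≤ ψ (t * x + (1 - t) * y)

/-- The class `SC₀` of proper, closed (upper semicontinuous), concave functions
`ℝ → [−∞, ∞)` that are symmetric about `0`. -/
def memSC0 (ψ : ℝ → EReal) : Prop :=
  (∀ x, ψ x < ⊤) ∧ (∃ x, ψ x ≠ ⊥) ∧ UpperSemicontinuous ψ ∧ EConcave ψ ∧ ∀ x, ψ (-x) = ψ x

/-- The criterion function `Ψ(θ, ψ, F) = ∫ ψ(x − θ) dμ(x) − ∫ e^{ψ(x)} dx`. -/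
def Psi (θ : ℝ) (ψ : ℝ → EReal) (μ : Measure ℝ) : EReal :=
  eIntegral μ (fun x => ψ (x - θ)) - ((∫⁻ x, expE (ψ x) : ℝ≥0∞) : EReal)

/-- `L(θ; F) = sup_{ψ ∈ SC₀} Ψ(θ, ψ, F)`. -/
def Ltheta (θ : ℝ) (μ : Measure ℝ) : EReal :=
  ⨆ ψ ∈ {ψ : ℝ → EReal | memSC0 ψ}, Psi θ ψ μ

/-- `L(F) = sup_{θ ∈ ℝ, ψ ∈ SC₀} Ψ(θ, ψ, F)`. -/
def Lsup (μ : Measure ℝ) : EReal := ⨆ θ : ℝ, Ltheta θ μ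

/-- Condition A: `μ` is a probability measure that is not a point mass,
with a finite first absolute moment. -/
def CondA (μ : Measure ℝ) : Prop :=
  IsProbabilityMeasure μ ∧ (∀ x : ℝ, μ ≠ Measure.dirac x) ∧
    (∫⁻ x, ENNReal.ofReal |x| ∂μ) < ⊤

/-- The empirical measure of the data `X₁, …, Xₙ`. -/
def empMeas {n : ℕ} (X : Fin n → ℝ) : Measure ℝ :=
  ((n : ℝ≥0∞))⁻¹ • ∑ i : Fin n, Measure.dirac (X i)

/-- The empirical measure of the first `n` entries of a sequence. -/
def empSeq (X : ℕ → ℝ) (n : ℕ) : Measure ℝ :=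
  ((n : ℝ≥0∞))⁻¹ • ∑ i ∈ Finset.range n, Measure.dirac (X i)

/-- The density `e^ψ` as a real-valued function. -/
def gReal (ψ : ℝ → EReal) (x : ℝ) : ℝ := (expE (ψ x)).toReal

/-- A knot of a concave function `ψ`: a point where the left and right derivatives
differ, or a boundary point of `dom ψ = {ψ > −∞}`. -/
def IsKnot (ψ : ℝ → EReal) (x : ℝ) : Prop :=
  x ∈ frontier {y : ℝ | ψ y ≠ ⊥} ∨
    derivWithin (fun y => (ψ y).toReal) (Set.Iio x) x ≠
      derivWithin (fun y => (ψ y).toReal) (Set.Ioi x) x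

/-- The class `𝒞` of proper closed concave functions `ℝ → [−∞, ∞)`. -/
def memC (φ : ℝ → EReal) : Prop :=
  (∀ x, φ x < ⊤) ∧ (∃ x, φ x ≠ ⊥) ∧ UpperSemicontinuous φ ∧ EConcave φ

/-- The criterion function `ω(φ, F) = ∫ φ dμ − ∫ e^{φ(x)} dx`. -/
def omegaF (φ : ℝ → EReal) (μ : Measure ℝ) : EReal :=
  eIntegral μ φ - ((∫⁻ x, expE (φ x) : ℝ≥0∞) : EReal)

/-- `(θ, ψ)` maximizes `Ψ(·, ·, μ)` over `ℝ × SC₀`. -/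
def IsMaximizer (θ : ℝ) (ψ : ℝ → EReal) (μ : Measure ℝ) : Prop :=
  memSC0 ψ ∧ ∀ (θ' : ℝ) (ψ' : ℝ → EReal), memSC0 ψ' → Psi θ' ψ' μ ≤ Psi θ ψ μ

/-- Condition B: the `θ`-component of a maximizer of `Ψ(·, ·, μ)` is unique. -/
def CondB (μ : Measure ℝ) : Prop :=
  ∀ (θ₁ θ₂ : ℝ) (ψ₁ ψ₂ : ℝ → EReal),
    IsMaximizer θ₁ ψ₁ μ → IsMaximizer θ₂ ψ₂ μ → θ₁ = θ₂

/-- `J(F) = {x : 0 < F(x) < 1}`. -/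
def Jset (μ : Measure ℝ) : Set ℝ := {x : ℝ | 0 < μ (Set.Iic x) ∧ μ (Set.Iic x) < 1}

/-- The Hellinger distance between two densities. -/
def Hdist (f g : ℝ → ℝ) : ℝ :=
  Real.sqrt ((1 / 2) * ∫ x, (Real.sqrt (f x) - Real.sqrt (g x)) ^ 2)

/-- Finite Fisher information for location: `g` is a.e. differentiable with
square-integrable score. -/
def FiniteFisher (g : ℝ → ℝ) : Prop :=
  ∃ D : ℝ → ℝ, (∀ᵐ x : ℝ, HasDerivAt g (D x) x) ∧
    (∫⁻ x, ENNReal.ofReal ((D x) ^ 2 / g x)) < ⊤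

/-- The symmetrization `μ^{sym}_θ = (μ + R_θ#μ)/2` of a measure about `θ`. -/
def symMeas (θ : ℝ) (μ : Measure ℝ) : Measure ℝ :=
  ((2 : ℝ≥0∞))⁻¹ • (μ + Measure.map (fun x => 2 * θ - x) μ)

end


lemma aux_mono {ψ : ℝ → EReal} (h : memSC0 ψ) {x y : ℝ} (hxy : |x| ≤ |y|) : ψ y ≤ ψ x := by
  obtain ⟨htop, -, -, hc, hs⟩ := h
  by_cases hy : y = 0
  · subst hy
    have : x = 0 := by simpa using hxy
    rw [this]
  by_cases hb : ψ y = ⊥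
  · rw [hb]; exact bot_le
  have habs : |x / y| ≤ 1 := by
    rw [abs_div]; exact div_le_one_of_le₀ hxy (abs_nonneg _)
  obtain ⟨h1, h2⟩ := abs_le.1 habs
  have key := hc y (-y) ((1 + x / y) / 2) (by linarith) (by linarith)
  have e : (1 + x / y) / 2 * y + (1 - (1 + x / y) / 2) * (-y) = x := by
    field_simp; ring
  rw [e, hs y] at key
  lift ψ y to ℝ using ⟨(htop y).ne, hb⟩ with s
  refine le_trans (le_of_eq ?_) key
  norm_cast
  ring

lemma toENN_mono {x y : EReal} (h : x ≤ y) : toENN x ≤ toENN y := by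
  unfold toENN
  by_cases hy : y = ⊤
  · simp [hy]
  have hx : x ≠ ⊤ := fun hx => hy (top_le_iff.1 (hx ▸ h))
  simp only [hx, hy, if_false]
  by_cases hb : x = ⊥
  · simp [hb]
  exact ENNReal.ofReal_le_ofReal (EReal.toReal_le_toReal h hb hy)

lemma expE_mono {x y : EReal} (h : x ≤ y) : expE x ≤ expE y := by
  unfold expE
  by_cases hy : y = ⊤
  · simp [hy]
  by_cases hb : x = ⊥
  · simp [hb]
  have hx : x ≠ ⊤ := fun hx => hy (top_le_iff.1 (hx ▸ h))
  have hyb : y ≠ ⊥ := fun hx => hb (le_bot_iff.1 (hx ▸ h))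
  simp only [hx, hy, hb, hyb, if_false]
  exact ENNReal.ofReal_le_ofReal (Real.exp_le_exp.2 (EReal.toReal_le_toReal h hb hy))

lemma eInt_mono {μ : Measure ℝ} {f g : ℝ → EReal} (h : ∀ᵐ x ∂μ, f x ≤ g x) :
    eIntegral μ f ≤ eIntegral μ g := by
  unfold eIntegral
  apply EReal.sub_le_sub
  · exact EReal.coe_ennreal_le_coe_ennreal_iff.2
      (lintegral_mono_ae (h.mono fun x hx => toENN_mono hx))
  · exact EReal.coe_ennreal_le_coe_ennreal_iff.2
      (lintegral_mono_ae (h.mono fun x hx => toENN_mono (EReal.neg_le_neg_iff.2 hx)))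

lemma eInt_const {μ : Measure ℝ} [IsProbabilityMeasure μ] (s : ℝ) :
    eIntegral μ (fun _ => (s : EReal)) = s := by
  unfold eIntegral toENN
  simp only [← EReal.coe_neg]
  simp only [EReal.coe_ne_top, if_false, EReal.toReal_coe, lintegral_const, measure_univ, mul_one,
    EReal.coe_ennreal_ofReal]
  norm_cast
  rcases le_total 0 s with h | h
  · rw [max_eq_left h, max_eq_right (by linarith)]; ring
  · rw [max_eq_right h, max_eq_left (by linarith)]; ring

lemma L_mono {μ : Measure ℝ} {θ₁ θ₂ : ℝ} (h : ∀ᵐ x ∂μ, |x - θ₂| ≤ |x - θ₁|) :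
    Ltheta θ₁ μ ≤ Ltheta θ₂ μ := by
  unfold Ltheta
  refine iSup₂_mono fun ψ hψ => ?_
  unfold Psi
  exact EReal.sub_le_sub (eInt_mono (h.mono fun x hx => aux_mono hψ hx)) le_rfl

lemma shift_mem {ψ : ℝ → EReal} (h : memSC0 ψ) {d : ℝ} (hd : 0 < d) (hb : ψ d ≠ ⊥) :
    memSC0 (fun y => ψ (|y| + d)) := by
  have h' := h
  obtain ⟨htop, -, hu, hc, hs⟩ := h
  refine ⟨fun x => htop _, ⟨0, by simpa using hb⟩, ?_, ?_, ?_⟩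
  · intro x
    exact SemicontinuousAt.comp (g := fun y : ℝ => |y| + d) (hu (|x| + d))
      (by fun_prop : Continuous fun y : ℝ => |y| + d).continuousAt
  · intro x y t h0 h1
    refine (hc (|x| + d) (|y| + d) t h0 h1).trans (aux_mono h' ?_)
    have h2 : |t * x + (1 - t) * y| ≤ t * |x| + (1 - t) * |y| := by
      refine (abs_add_le _ _).trans ?_
      rw [abs_mul, abs_mul, abs_of_nonneg h0, abs_of_nonneg (sub_nonneg.2 h1)]
    have h3 := abs_nonneg (t * x + (1 - t) * y)
    have h4 : 0 ≤ |t * x + (1 - t) * y| + d := by linarith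
    rw [abs_of_nonneg h4]
    refine le_trans ?_ (le_abs_self _)
    linarith
  · intro x; simp

lemma shift_int {ψ : ℝ → EReal} (h : memSC0 ψ) {d : ℝ} (hd : 0 < d) :
    (∫⁻ y, expE (ψ (|y| + d))) + ENNReal.ofReal (2 * d) * expE (ψ d) ≤ ∫⁻ y, expE (ψ y) := by
  have hs := h.2.2.2.2
  have e1 : ∫⁻ y in Ioi (0:ℝ), expE (ψ (|y| + d)) = ∫⁻ y in Ioi d, expE (ψ y) := by
    rw [← lintegral_indicator measurableSet_Ioi, ← lintegral_indicator measurableSet_Ioi,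
      ← lintegral_add_right_eq_self (indicator (Ioi d) _) d]
    congr 1; ext y
    by_cases hy : 0 < y
    · simp [indicator, hy, abs_of_pos]
    · simp [indicator, hy]
  have e2 : ∫⁻ y in Iic (0:ℝ), expE (ψ (|y| + d)) = ∫⁻ y in Iic (-d), expE (ψ y) := by
    rw [← lintegral_indicator measurableSet_Iic, ← lintegral_indicator measurableSet_Iic,
      ← lintegral_add_right_eq_self (indicator (Iic (-d)) _) (-d)]
    congr 1; ext y
    by_cases hy : y ≤ 0
    · have : ψ (-y + d) = ψ (y - d) := by rw [← hs]; congr 1; ring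
      simp [indicator, hy, abs_of_nonpos, this, sub_eq_add_neg] at *
    · simp [indicator, hy]
  have e3 : ENNReal.ofReal (2 * d) * expE (ψ d) ≤ ∫⁻ y in Ioc (-d) d, expE (ψ y) := by
    calc _ = ∫⁻ y in Ioc (-d) d, expE (ψ d) := by
          rw [setLIntegral_const, Real.volume_Ioc, mul_comm]; congr 2; ring
      _ ≤ _ := by
          refine setLIntegral_mono' measurableSet_Ioc fun y hy => expE_mono (aux_mono h ?_)
          rw [abs_of_pos hd]; exact abs_le.2 ⟨hy.1.le, hy.2⟩
  have s1 : ∫⁻ y, expE (ψ (|y| + d)) = (∫⁻ y in Iic (0:ℝ), expE (ψ (|y| + d)))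
      + ∫⁻ y in Ioi (0:ℝ), expE (ψ (|y| + d)) := by
    rw [← lintegral_add_compl _ (measurableSet_Iic (a := (0:ℝ))), compl_Iic]
  have s2 : ∫⁻ y, expE (ψ y) = (∫⁻ y in Iic (-d), expE (ψ y))
      + ((∫⁻ y in Ioc (-d) d, expE (ψ y)) + ∫⁻ y in Ioi d, expE (ψ y)) := by
    rw [← lintegral_add_compl _ (measurableSet_Iic (a := (-d:ℝ))), compl_Iic,
      ← Ioc_union_Ioi_eq_Ioi (show -d ≤ d by linarith),
      lintegral_union measurableSet_Ioi (Ioc_disjoint_Ioi le_rfl)]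
  rw [s1, s2, e1, e2, add_assoc, add_comm (∫⁻ y in Ioi d, _)]
  gcongr

lemma key_step {μ : Measure ℝ} [IsProbabilityMeasure μ] {θ θ' d : ℝ} (hd : 0 < d)
    (h : ∀ᵐ x ∂μ, |x - θ'| + d = |x - θ|) {ψ : ℝ → EReal} (hψ : memSC0 ψ)
    (hb : Psi θ ψ μ ≠ ⊥) :
    ∃ p : ℝ, Psi θ ψ μ = p ∧ p ≤ - 1 - Real.log (2 * d) ∧
      ((p + 2 * d * Real.exp p : ℝ) : EReal) ≤ Ltheta θ' μ := by
  have hs := hψ.2.2.2.2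
  have hE : eIntegral μ (fun x => ψ (x - θ)) ≤ ψ d := by
    by_cases hbd : ψ d = ⊥
    · exfalso
      have : eIntegral μ (fun x => ψ (x - θ)) ≤ ⊥ := by
        unfold eIntegral
        have hh : ∀ᵐ x ∂μ, ψ (x - θ) = ⊥ := h.mono fun x hx => by
          refine le_bot_iff.1 (hbd ▸ aux_mono hψ ?_)
          rw [abs_of_pos hd, ← hx]; linarith [abs_nonneg (x - θ')]
        have i2 : ∫⁻ x, toENN (-ψ (x - θ)) ∂μ = ∫⁻ x, ⊤ ∂μ :=
          lintegral_congr_ae (hh.mono fun x hx => by simp [hx, toENN])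
        rw [i2]
        simp
      apply hb
      unfold Psi
      rw [le_bot_iff.1 this, EReal.bot_sub]
    · have hdt := (hψ.1 d).ne
      have : ψ d = ((ψ d).toReal : EReal) := (EReal.coe_toReal hdt hbd).symm
      rw [this, ← eInt_const (μ := μ) (ψ d).toReal, ← this]
      refine eInt_mono (h.mono fun x hx => aux_mono hψ ?_)
      rw [abs_of_pos hd, ← hx]; linarith [abs_nonneg (x - θ')]
  have hEb : eIntegral μ (fun x => ψ (x - θ)) ≠ ⊥ := by
    intro h0; apply hb; unfold Psi; rw [h0, EReal.bot_sub]
  have hbd : ψ d ≠ ⊥ := fun h0 => hEb (le_bot_iff.1 (h0 ▸ hE))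
  have hdt := (hψ.1 d).ne
  have hEt : eIntegral μ (fun x => ψ (x - θ)) ≠ ⊤ := fun h0 => hdt (top_le_iff.1 (h0 ▸ hE))
  have hI : (∫⁻ x, expE (ψ x)) ≠ ⊤ := by
    intro h0; apply hb; unfold Psi; rw [h0]; simp
  have hsh := shift_int hψ hd
  have hEeq : eIntegral μ (fun x => ψ (|x - θ'| + d)) = eIntegral μ (fun x => ψ (x - θ)) := by
    have hh : ∀ᵐ x ∂μ, ψ (|x - θ'| + d) = ψ (x - θ) := h.mono fun x hx => by
      rw [hx]
      rcases abs_choice (x - θ) with h1 | h1 <;> rw [h1]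
      exact hs _
    exact le_antisymm (eInt_mono (hh.mono fun x hx => hx.le)) (eInt_mono (hh.mono fun x hx => hx.ge))
  have hL : Psi θ' (fun y => ψ (|y| + d)) μ ≤ Ltheta θ' μ := by
    unfold Ltheta
    exact le_iSup₂_of_le (fun y => ψ (|y| + d)) (shift_mem hψ hd hbd) le_rfl
  unfold Psi at hL ⊢
  simp only [] at hL
  rw [hEeq] at hL
  have hI' : (∫⁻ y, expE (ψ (|y| + d))) ≠ ⊤ :=
    ne_top_of_le_ne_top hI (le_self_add.trans hsh)
  have hexp : expE (ψ d) = ENNReal.ofReal (Real.exp (ψ d).toReal) := by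
    simp [expE, hbd, hdt]
  rw [hexp] at hsh
  generalize ψ d = s at *
  lift s to ℝ using ⟨hdt, hbd⟩
  generalize eIntegral μ (fun x => ψ (x - θ)) = E at *
  lift E to ℝ using ⟨hEt, hEb⟩
  generalize (∫⁻ x, expE (ψ x)) = I at *
  generalize (∫⁻ y, expE (ψ (|y| + d))) = I' at *
  lift I to ℝ≥0 using hI
  lift I' to ℝ≥0 using hI'
  rw [EReal.toReal_coe, ← ENNReal.ofReal_mul (by linarith)] at hsh
  have hsh' : (I' : ℝ) + 2 * d * Real.exp s ≤ I := by
    have := ENNReal.toReal_mono (by simp) hsh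
    rwa [ENNReal.toReal_add (by simp) (by simp), ENNReal.toReal_ofReal (by positivity)] at this
  have hEs : E ≤ s := by exact_mod_cast hE
  have hIn : (0:ℝ) ≤ I' := I'.2
  have hIn2 : (0:ℝ) ≤ I := I.2
  refine ⟨E - I, by norm_cast, ?_, le_trans ?_ hL⟩
  · have := Real.add_one_le_exp (s + Real.log (2 * d))
    rw [Real.exp_add, Real.exp_log (by linarith)] at this
    nlinarith
  · have : Real.exp (E - I) ≤ Real.exp s := Real.exp_le_exp.2 (by linarith)
    have h2 : E - I + 2 * d * Real.exp (E - I) ≤ E - I' := by nlinarith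
    calc _ ≤ ((E - I' : ℝ) : EReal) := EReal.coe_le_coe_iff.2 h2
      _ = _ := by norm_cast

lemma exists_nonbot {μ : Measure ℝ} (hA : CondA μ) (θ : ℝ) :
    ∃ ψ, memSC0 ψ ∧ Psi θ ψ μ ≠ ⊥ := by
  obtain ⟨hp, -, hm⟩ := hA
  refine ⟨fun x => ((-|x| : ℝ) : EReal), ⟨fun x => EReal.coe_lt_top _, ⟨0, EReal.coe_ne_bot _⟩,
    ?_, ?_, ?_⟩, ?_⟩
  · exact Continuous.upperSemicontinuous (continuous_coe_real_ereal.comp (by fun_prop))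
  · intro x y t h0 h1
    have h2 : |t * x + (1 - t) * y| ≤ t * |x| + (1 - t) * |y| := by
      refine (abs_add_le _ _).trans ?_
      rw [abs_mul, abs_mul, abs_of_nonneg h0, abs_of_nonneg (sub_nonneg.2 h1)]
    have h3 : t * (-|x|) + (1 - t) * (-|y|) ≤ -|t * x + (1 - t) * y| := by linarith
    beta_reduce
    exact_mod_cast h3
  · intro x; simp
  · have h1 : ∫⁻ x, expE ((-|x| : ℝ) : EReal) ≠ ⊤ := by
      have hi : Integrable (fun x : ℝ => Real.exp (-|x|)) := by
        refine (integrable_inv_one_add_sq.const_mul 2).mono' (by fun_prop) (ae_of_all _ fun x => ?_)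
        rw [Real.norm_eq_abs, abs_of_pos (Real.exp_pos _), Real.exp_neg, ← div_eq_mul_inv,
          inv_eq_one_div, div_le_div_iff₀ (Real.exp_pos _) (by positivity)]
        have := Real.quadratic_le_exp_of_nonneg (abs_nonneg x)
        rw [sq_abs] at this
        linarith [abs_nonneg x]
      have := hi.lintegral_lt_top.ne
      simpa [expE] using this
    have h2 : ∫⁻ x, toENN (-(((-|x - θ| : ℝ) : EReal))) ∂μ ≠ ⊤ := by
      have : ∫⁻ x, toENN (-(((-|x - θ| : ℝ) : EReal))) ∂μ
          ≤ ∫⁻ x, (ENNReal.ofReal |x| + ENNReal.ofReal |θ|) ∂μ := by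
        refine lintegral_mono fun x => ?_
        rw [← EReal.coe_neg, ← ENNReal.ofReal_add (abs_nonneg _) (abs_nonneg _)]
        simp only [toENN, EReal.coe_ne_top, if_false, EReal.toReal_coe, neg_neg]
        exact ENNReal.ofReal_le_ofReal (abs_sub _ _)
      refine ne_top_of_le_ne_top ?_ this
      rw [lintegral_add_right _ measurable_const]
      simp [hm.ne]
    have h3 : ∫⁻ x, toENN ((-|x - θ| : ℝ) : EReal) ∂μ = 0 := by
      simp only [toENN, EReal.coe_ne_top, if_false, EReal.toReal_coe]
      simp [ENNReal.ofReal_of_nonpos]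
    unfold Psi eIntegral
    simp only [h3]
    generalize (∫⁻ x, expE ((-|x| : ℝ) : EReal)) = A at *
    generalize (∫⁻ x, toENN (-(((-|x - θ| : ℝ) : EReal))) ∂μ) = B at *
    lift A to ℝ≥0 using h1
    lift B to ℝ≥0 using h2
    have : ((0:ℝ≥0∞):EReal) - ((B:ℝ≥0∞):EReal) - ((A:ℝ≥0∞):EReal) = ((0 - B - A : ℝ) : EReal) := by
      norm_cast
    rw [this]
    exact EReal.coe_ne_bot _

lemma strict_step {μ : Measure ℝ} (hA : CondA μ) {θ θ' d : ℝ} (hd : 0 < d)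
    (h : ∀ᵐ x ∂μ, |x - θ'| + d = |x - θ|) : ¬ Ltheta θ' μ ≤ Ltheta θ μ := by
  intro hle
  have := hA.1
  obtain ⟨ψ₀, hψ₀, hb₀⟩ := exists_nonbot hA θ
  obtain ⟨p₀, hp₀, -, -⟩ := key_step hd h hψ₀ hb₀
  have hge : (p₀ : EReal) ≤ Ltheta θ μ := by
    unfold Ltheta
    exact le_iSup₂_of_le ψ₀ hψ₀ hp₀.ge
  have hub : Ltheta θ μ ≤ ((- 1 - Real.log (2 * d) : ℝ) : EReal) := by
    unfold Ltheta
    refine iSup₂_le fun ψ hψ => ?_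
    by_cases hb : Psi θ ψ μ = ⊥
    · rw [hb]; exact bot_le
    obtain ⟨p, hp, hp', -⟩ := key_step hd h hψ hb
    rw [hp]; exact_mod_cast hp'
  have hLt : Ltheta θ μ ≠ ⊤ := fun h0 => EReal.coe_ne_top _ (top_le_iff.1 (h0 ▸ hub))
  have hLb : Ltheta θ μ ≠ ⊥ := fun h0 => EReal.coe_ne_bot _ (le_bot_iff.1 (h0 ▸ hge))
  obtain ⟨l, hl⟩ : ∃ l : ℝ, Ltheta θ μ = l := ⟨_, (EReal.coe_toReal hLt hLb).symm⟩
  have hpl : p₀ ≤ l := by rw [hl] at hge; exact_mod_cast hge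
  have hδ : 0 < 2 * d * Real.exp (p₀ - 1) := by positivity
  have hlt : ((max (p₀ - 1) (l - 2 * d * Real.exp (p₀ - 1)) : ℝ) : EReal) < Ltheta θ μ := by
    rw [hl]
    exact EReal.coe_lt_coe_iff.2 (max_lt (by linarith) (by linarith))
  unfold Ltheta at hlt
  obtain ⟨ψ, hlt⟩ := lt_iSup_iff.1 hlt
  obtain ⟨hψ, hlt⟩ := lt_iSup_iff.1 hlt
  obtain ⟨p, hp, -, hpL⟩ := key_step hd h hψ (ne_bot_of_gt hlt)
  rw [hp, EReal.coe_lt_coe_iff] at hlt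
  have h1 := (le_max_left _ _).trans_lt hlt
  have h2 := (le_max_right _ _).trans_lt hlt
  have h3 : p + 2 * d * Real.exp p ≤ l := by
    have := hpL.trans hle
    rw [hl] at this
    exact_mod_cast this
  have h4 : Real.exp (p₀ - 1) ≤ Real.exp p := Real.exp_le_exp.2 h1.le
  nlinarith

lemma Iio_null {μ : Measure ℝ} {c : ℝ} (h : ∀ x < c, μ (Iic x) = 0) : ∀ᵐ x ∂μ, c ≤ x := by
  obtain ⟨u, -, hu, hlim⟩ := exists_seq_strictMono_tendsto c
  have : ∀ᵐ x ∂μ, ∀ n, u n < x := by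
    rw [ae_all_iff]; intro n
    have := h (u n) (hu n)
    rw [ae_iff]; simpa [Iic] using this
  filter_upwards [this] with x hx
  exact le_of_tendsto' hlim fun n => (hx n).le

lemma Ioi_null {μ : Measure ℝ} [IsProbabilityMeasure μ] {c : ℝ}
    (h : ∀ x > c, μ (Iic x) = 1) : ∀ᵐ x ∂μ, x ≤ c := by
  obtain ⟨u, -, hu, hlim⟩ := exists_seq_strictAnti_tendsto c
  have : ∀ᵐ x ∂μ, ∀ n, x ≤ u n := by
    rw [ae_all_iff]; intro n
    exact (prob_compl_eq_zero_iff measurableSet_Iic).2 (h (u n) (hu n))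
  filter_upwards [this] with x hx
  exact ge_of_tendsto' hlim fun n => hx n

lemma J_nonempty {μ : Measure ℝ} (hA : CondA μ) : (Jset μ).Nonempty := by
  have := hA.1
  by_contra hne
  rw [not_nonempty_iff_eq_empty] at hne
  have h01 : ∀ x, μ (Iic x) = 0 ∨ μ (Iic x) = 1 := by
    intro x
    have : x ∉ Jset μ := by rw [hne]; simp
    by_contra! hh
    exact this ⟨pos_iff_ne_zero.2 hh.1, lt_of_le_of_ne prob_le_one hh.2⟩
  obtain ⟨x1, hx1⟩ : ∃ x, μ (Iic x) = 1 := by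
    have := tendsto_measure_Iic_atTop μ
    rw [measure_univ] at this
    obtain ⟨x, hx⟩ := (this.eventually (lt_mem_nhds (show (0:ℝ≥0∞) < 1 by simp))).exists
    exact ⟨x, (h01 x).resolve_left hx.ne'⟩
  obtain ⟨x0, hx0⟩ : ∃ x, μ (Iic x) = 0 := by
    by_contra! hno
    have hall : ∀ᵐ x ∂μ, ∀ n : ℕ, x ≤ -(n : ℝ) := by
      rw [ae_all_iff]; intro n
      exact (prob_compl_eq_zero_iff measurableSet_Iic).2 ((h01 _).resolve_left (hno _))
    obtain ⟨x, hx⟩ := hall.exists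
    obtain ⟨n, hn⟩ := exists_nat_gt (-x)
    linarith [hx n]
  have hbdd : BddBelow {x | μ (Iic x) = 1} := by
    refine ⟨x0, fun y hy => ?_⟩
    by_contra! hlt
    have := measure_mono (μ := μ) (Iic_subset_Iic.2 hlt.le)
    rw [hx0, hy.out] at this
    simp at this
  set c := sInf {x | μ (Iic x) = 1} with hc
  have hlo : ∀ᵐ x ∂μ, c ≤ x := Iio_null fun x hx =>
    (h01 x).resolve_right fun h1 => absurd (csInf_le hbdd h1) (not_le.2 hx)
  have hhi : ∀ᵐ x ∂μ, x ≤ c := Ioi_null fun x hx => by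
    obtain ⟨y, hy, hyx⟩ := exists_lt_of_csInf_lt ⟨x1, hx1⟩ hx
    exact le_antisymm prob_le_one (hy.out ▸ measure_mono (Iic_subset_Iic.2 hyx.le))
  have hae : ∀ᵐ x ∂μ, x = c := by
    filter_upwards [hlo, hhi] with x h1 h2 using le_antisymm h2 h1
  apply hA.2.1 c
  ext s hs
  rw [Measure.dirac_apply' _ hs]
  by_cases hcs : c ∈ s
  · simp only [indicator, hcs, if_true, Pi.one_apply]
    have : μ sᶜ = 0 := by
      exact measure_mono_null (fun x hx (h : x = c) => hx (h ▸ hcs)) hae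
    exact (prob_compl_eq_zero_iff hs).1 this
  · simp only [indicator, hcs, if_false]
    exact measure_mono_null (fun x hx (h : x = c) => hcs (h ▸ hx)) hae

lemma J_left {μ : Measure ℝ} (hA : CondA μ) {c : ℝ} (h : ∀ x ∈ Jset μ, c ≤ x) :
    ∀ᵐ x ∂μ, c ≤ x := by
  have := hA.1
  obtain ⟨y, hy⟩ := J_nonempty hA
  refine Iio_null fun x hx => ?_
  by_contra h0
  have : x ∈ Jset μ := ⟨pos_iff_ne_zero.2 h0,
    (measure_mono (Iic_subset_Iic.2 (hx.le.trans (h y hy)))).trans_lt hy.2⟩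
  exact absurd (h x this) (not_le.2 hx)

lemma J_right {μ : Measure ℝ} (hA : CondA μ) {c : ℝ} (h : ∀ x ∈ Jset μ, x ≤ c) :
    ∀ᵐ x ∂μ, x ≤ c := by
  have := hA.1
  obtain ⟨y, hy⟩ := J_nonempty hA
  refine Ioi_null fun x hx => ?_
  by_contra h0
  have : x ∈ Jset μ := ⟨hy.1.trans_le (measure_mono (Iic_subset_Iic.2 ((h y hy).trans hx.le))),
    lt_of_le_of_ne prob_le_one h0⟩
  exact absurd (h x this) (not_le.2 hx)

/-- Under Condition A, `θ ↦ L(θ; F)` is non-decreasing to the left of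
`J(F) = {0 < F < 1}` and non-increasing to the right of `J(F)`; consequently every
maximizer of `θ ↦ L(θ; F)` lies in the closure of `J(F)`. -/
theorem statement12 (μ : Measure ℝ) (hA : CondA μ) :
    (∀ θ₁ θ₂ : ℝ, θ₁ ≤ θ₂ → (∀ x ∈ Jset μ, θ₂ ≤ x) → Ltheta θ₁ μ ≤ Ltheta θ₂ μ) ∧
      (∀ θ₁ θ₂ : ℝ, θ₁ ≤ θ₂ → (∀ x ∈ Jset μ, x ≤ θ₁) → Ltheta θ₂ μ ≤ Ltheta θ₁ μ) ∧
      ∀ θstar : ℝ, (∀ θ' : ℝ, Ltheta θ' μ ≤ Ltheta θstar μ) →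
        θstar ∈ closure (Jset μ) := by
  refine ⟨fun θ₁ θ₂ h12 hJ => L_mono ?_, fun θ₁ θ₂ h12 hJ => L_mono ?_, fun θ hmax => ?_⟩
  · filter_upwards [J_left hA hJ] with x hx
    rw [abs_of_nonneg (by linarith), abs_of_nonneg (by linarith)]; linarith
  · filter_upwards [J_right hA hJ] with x hx
    rw [abs_of_nonpos (by linarith), abs_of_nonpos (by linarith)]; linarith
  · by_contra hcl
    rw [Metric.mem_closure_iff] at hcl
    push Not at hcl
    obtain ⟨d, hd, hJ⟩ := hcl
    obtain ⟨y, hy⟩ := J_nonempty hA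
    have hnot : θ ∉ Jset μ := fun h => by have := hJ θ h; rw [dist_self] at this; linarith
    rcases lt_or_ge θ y with hlt | hge
    · have hall : ∀ x ∈ Jset μ, θ + d ≤ x := by
        intro x hx
        have h1 := hJ x hx
        rw [Real.dist_eq] at h1
        by_cases hxt : x ≤ θ
        · exact absurd ⟨hx.1.trans_le (measure_mono (Iic_subset_Iic.2 hxt)),
            (measure_mono (Iic_subset_Iic.2 hlt.le)).trans_lt hy.2⟩ hnot
        · rw [abs_of_nonpos (by linarith)] at h1; linarith
      refine strict_step hA hd ?_ (hmax (θ + d))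
      filter_upwards [J_left hA hall] with x hx
      rw [abs_of_nonneg (by linarith), abs_of_nonneg (by linarith)]; ring
    · have hall : ∀ x ∈ Jset μ, x ≤ θ - d := by
        intro x hx
        have h1 := hJ x hx
        rw [Real.dist_eq] at h1
        by_cases hxt : θ ≤ x
        · exact absurd ⟨hy.1.trans_le (measure_mono (Iic_subset_Iic.2 hge)),
            (measure_mono (Iic_subset_Iic.2 hxt)).trans_lt hx.2⟩ hnot
        · rw [abs_of_nonneg (by linarith)] at h1; linarith
      refine strict_step hA hd ?_ (hmax (θ - d))
      filter_upwards [J_right hA hall] with x hx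
      rw [abs_of_nonpos (by linarith), abs_of_nonpos (by linarith)]; ring
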